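/- In the setting of the zero-inertia limit of the kinetic aggregation model — ∇K ∈ W^{1,∞}(ℝ^d), f₀ a compactly supported Borel probability measure on ℝ^d × ℝ^d, f_ε the measure solutions with inertia parameter ε and x-marginals ρ_ε(t), and ρ(t) a narrowly continuous family of compactly supported probability measures such that ∇K ∗ ρ_ε → ∇K ∗ ρ uniformly on [0,T] × Ω for every compact Ω ⊂ ℝ^d — let (x₀, v₀) ∈ supp f₀ and let (x_ε(t), v_ε(t)) be the characteristic path solving dx/dt = v, ε dv/dt = −v − (∇K ∗ ρ_ε)(t,x) with (x_ε(0), v_ε(0)) = (x₀, v₀). Then as ε → 0: x_ε(t) → x(t) for all t ∈ [0,T], where x(t) is the solution of dx/dt = −(∇K ∗ ρ)(t,x) with x(0) = x₀; and v_ε(t) → −(∇K ∗ ρ)(t, x(t)) for all t ∈ (0,T]. -/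

import Mathlib

open Set Filter Topology MeasureTheory BoundedContinuousFunction

/-- The interaction field `(∇K ∗ μ)(x) = ∫ ∇K(x - y) dμ(y)`. -/
noncomputable def interactionField {d : ℕ}
    (gradK : EuclideanSpace ℝ (Fin d) → EuclideanSpace ℝ (Fin d))
    (μ : Measure (EuclideanSpace ℝ (Fin d))) (x : EuclideanSpace ℝ (Fin d)) :
    EuclideanSpace ℝ (Fin d) :=
  ∫ y, gradK (x - y) ∂μ

/-- `f : [0,T] → P(ℝ^d × ℝ^d)` is a measure solution of the kinetic aggregation
equation with inertia parameter `ε` and initial datum `f₀`: `f t` is the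
push-forward of `f₀` under the flow map `Φ t` of the characteristic system
`dx/dt = v`, `ε dv/dt = -v - (∇K ∗ ρ)(t,x)`, where `ρ t` is the first marginal
of `f t`. -/
def IsKineticMeasureSolution {d : ℕ}
    (gradK : EuclideanSpace ℝ (Fin d) → EuclideanSpace ℝ (Fin d)) (ε T : ℝ)
    (f₀ : Measure (EuclideanSpace ℝ (Fin d) × EuclideanSpace ℝ (Fin d)))
    (f : ℝ → Measure (EuclideanSpace ℝ (Fin d) × EuclideanSpace ℝ (Fin d))) : Prop :=
  ∃ Φ : ℝ → (EuclideanSpace ℝ (Fin d) × EuclideanSpace ℝ (Fin d)) →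
        (EuclideanSpace ℝ (Fin d) × EuclideanSpace ℝ (Fin d)),
    (∀ t, Measurable (Φ t)) ∧
    (∀ p, Φ 0 p = p) ∧
    (∀ p, ∀ t ∈ Icc (0:ℝ) T,
      HasDerivAt (fun s => (Φ s p).1) ((Φ t p).2) t ∧
      HasDerivAt (fun s => (Φ s p).2)
        (ε⁻¹ • (-(Φ t p).2 -
          interactionField gradK ((f t).map Prod.fst) (Φ t p).1)) t) ∧
    (∀ t ∈ Icc (0:ℝ) T, f t = f₀.map (Φ t))

/-!
Along a characteristic path, `x_ε + ε v_ε` has derivative `-(∇K ∗ ρ_ε)(t, x_ε)`, in which no inverse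
power of `ε` is left. The velocity solves `ε v' = -v - g` with a forcing `‖g‖ ≤ M`, which keeps
`‖v_ε‖ ≤ max ‖v₀‖ M` uniformly in `ε`. Hence `x_ε + ε v_ε` is `O(ε)`-close to `x_ε` and is an
approximate solution of the limiting equation, and Grönwall's inequality gives `x_ε → x` uniformly
on `[0, T]`. The forcing `g` then converges uniformly too. Since `v_ε` forgets its past at the rate
`exp (-t / ε)` and follows `-g`, it converges to the limit of `-g` away from the initial layer at
`t = 0`.
-/

section Relaxation

lemma hasDerivAt_exp_sub_div (ε a t : ℝ) :
    HasDerivAt (fun r ↦ Real.exp ((r - a) / ε)) (Real.exp ((t - a) / ε) * ε⁻¹) t := by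
  simpa [one_div] using (((hasDerivAt_id t).sub_const a).div_const ε).exp

variable {E : Type*} [NormedAddCommGroup E] [NormedSpace ℝ E]

lemma hasDerivWithinAt_exp_smul_add_const {ε a t : ℝ} {s : Set ℝ} {v : ℝ → E} {w G : E}
    (hv : HasDerivWithinAt v (ε⁻¹ • (-v t - w)) s t) :
    HasDerivWithinAt (fun r ↦ Real.exp ((r - a) / ε) • (v r + G))
      ((Real.exp ((t - a) / ε) * ε⁻¹) • (G - w)) s t := by
  refine ((hasDerivAt_exp_sub_div ε a t).hasDerivWithinAt.smul (hv.add_const G)).congr_deriv ?_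
  module

lemma norm_add_le_of_relaxation {ε a b η : ℝ} {v g : ℝ → E} {G : E} (hε : 0 < ε) (hab : a ≤ b)
    (hv : IsIntegralCurveOn v (fun t w ↦ ε⁻¹ • (-w - g t)) (Icc a b))
    (hg : ∀ t ∈ Icc a b, ‖g t - G‖ ≤ η) :
    ‖v b + G‖ ≤
      Real.exp (-((b - a) / ε)) * ‖v a + G‖ + (1 - Real.exp (-((b - a) / ε))) * η := by
  have hderiv (t : ℝ) (ht : t ∈ Icc a b) :=
    hasDerivWithinAt_exp_smul_add_const (a := a) (G := G) (hv t ht)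
  have hweighted : ‖Real.exp ((b - a) / ε) • (v b + G)‖ ≤
      ‖v a + G‖ + η * (Real.exp ((b - a) / ε) - 1) :=
    image_norm_le_of_norm_deriv_right_le_deriv_boundary
      (f := fun r ↦ Real.exp ((r - a) / ε) • (v r + G))
      (B := fun r ↦ ‖v a + G‖ + η * (Real.exp ((r - a) / ε) - 1))
      (B' := fun r ↦ η * (Real.exp ((r - a) / ε) * ε⁻¹))
      (fun t ht ↦ (hderiv t ht).continuousWithinAt)
      (fun t ht ↦ (hderiv t (Ico_subset_Icc_self ht)).mono_of_mem_nhdsWithin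
        (Icc_mem_nhdsGE_of_mem ht))
      (by simp)
      (fun t ↦ (((hasDerivAt_exp_sub_div ε a t).sub_const 1).const_mul η).const_add _)
      (fun t ht ↦ by
        rw [norm_smul, Real.norm_of_nonneg (by positivity), norm_sub_rev, mul_comm]
        gcongr
        exact hg t (Ico_subset_Icc_self ht))
      (right_mem_Icc.2 hab)
  rw [norm_smul, Real.norm_of_nonneg (Real.exp_nonneg _)] at hweighted
  calc ‖v b + G‖
      = Real.exp (-((b - a) / ε)) * (Real.exp ((b - a) / ε) * ‖v b + G‖) := by
        rw [← mul_assoc, ← Real.exp_add, neg_add_cancel, Real.exp_zero, one_mul]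
    _ ≤ Real.exp (-((b - a) / ε)) * (‖v a + G‖ + η * (Real.exp ((b - a) / ε) - 1)) := by gcongr
    _ = _ := by
        rw [Real.exp_neg]
        field_simp

lemma norm_le_max_of_relaxation {ε a b M : ℝ} {v g : ℝ → E} (hε : 0 < ε)
    (hv : IsIntegralCurveOn v (fun t w ↦ ε⁻¹ • (-w - g t)) (Icc a b))
    (hg : ∀ t ∈ Icc a b, ‖g t‖ ≤ M) {t : ℝ} (ht : t ∈ Icc a b) :
    ‖v t‖ ≤ max ‖v a‖ M := by
  have hsub : Icc a t ⊆ Icc a b := Icc_subset_Icc_right ht.2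
  have hexp : Real.exp (-((t - a) / ε)) ≤ 1 :=
    Real.exp_le_one_iff.2 (neg_nonpos.2 (div_nonneg (sub_nonneg.2 ht.1) hε.le))
  have hrelax := norm_add_le_of_relaxation (G := 0) hε ht.1 (hv.mono hsub)
    (fun s hs ↦ by simpa using hg s (hsub hs))
  rw [add_zero, add_zero] at hrelax
  exact hrelax.trans (Convex.combo_le_max _ _ (Real.exp_nonneg _) (sub_nonneg.2 hexp)
    (add_sub_cancel _ _))

lemma tendsto_exp_neg_div_nhdsGT_zero {r : ℝ} (hr : 0 < r) :
    Tendsto (fun ε ↦ Real.exp (-(r / ε))) (𝓝[>] 0) (𝓝 0) := by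
  have hdiv : Tendsto (fun ε : ℝ ↦ r / ε) (𝓝[>] 0) atTop := by
    simpa [div_eq_mul_inv] using (tendsto_inv_nhdsGT_zero (𝕜 := ℝ)).const_mul_atTop hr
  exact Real.tendsto_exp_neg_atTop_nhds_zero.comp hdiv

lemma tendstoUniformlyOn_neg_of_relaxation {a b c V : ℝ} {v g : ℝ → ℝ → E} {G : ℝ → E}
    (hac : a < c)
    (hv : ∀ ε > 0, IsIntegralCurveOn (v ε) (fun t w ↦ ε⁻¹ • (-w - g ε t)) (Icc a b))
    (hV : ∀ ε > 0, ∀ t ∈ Icc a b, ‖v ε t‖ ≤ V)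
    (hg : TendstoUniformlyOn g G (𝓝[>] 0) (Icc a b)) (hG : ContinuousOn G (Icc a b)) :
    TendstoUniformlyOn v (fun t ↦ -G t) (𝓝[>] 0) (Icc c b) := by
  rw [Metric.tendstoUniformlyOn_iff] at hg ⊢
  intro η hη
  obtain ⟨C, hC⟩ := isCompact_Icc.exists_bound_of_continuousOn hG
  obtain ⟨δ, hδ, hGδ⟩ := Metric.uniformContinuousOn_iff_le.1
    (isCompact_Icc.uniformContinuousOn_of_continuous hG) (η / 3) (by positivity)
  -- Relaxation acts on a window `[t - r, t]` so short that `G` is almost constant there.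
  obtain ⟨r, hr, hrδ, hrc⟩ : ∃ r > 0, r ≤ δ ∧ r ≤ c - a :=
    ⟨min δ (c - a), lt_min hδ (sub_pos.2 hac), min_le_left _ _, min_le_right _ _⟩
  have hdecay : ∀ᶠ ε in 𝓝[>] (0 : ℝ), Real.exp (-(r / ε)) * (V + C) < η / 3 :=
    ((tendsto_exp_neg_div_nhdsGT_zero hr).mul_const (V + C)).eventually_lt_const
      (by rw [zero_mul]; positivity)
  filter_upwards [hg (η / 3) (by positivity), hdecay, self_mem_nhdsWithin] with ε hgε hε hpos t ht
  have hsub : Icc (t - r) t ⊆ Icc a b := Icc_subset_Icc (by linarith [ht.1]) ht.2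
  have htr : t - r ≤ t := sub_le_self t hr.le
  have hosc (s : ℝ) (hs : s ∈ Icc (t - r) t) : ‖g ε s - G t‖ ≤ η / 3 + η / 3 := by
    rw [← dist_eq_norm]
    refine (dist_triangle _ (G s) _).trans (add_le_add ?_ ?_)
    · rw [dist_comm]
      exact (hgε s (hsub hs)).le
    · refine hGδ s (hsub hs) t (hsub (right_mem_Icc.2 htr)) ?_
      rw [Real.dist_eq, abs_le]
      constructor <;> linarith [hs.1, hs.2]
  have hstart : ‖v ε (t - r) + G t‖ ≤ V + C :=
    norm_add_le_of_le (hV ε hpos _ (hsub (left_mem_Icc.2 htr)))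
      (hC t (hsub (right_mem_Icc.2 htr)))
  have hrelax := norm_add_le_of_relaxation hpos htr ((hv ε hpos).mono hsub) hosc
  rw [sub_sub_cancel] at hrelax
  calc dist (-G t) (v ε t) = ‖v ε t + G t‖ := by rw [dist_comm, dist_eq_norm, sub_neg_eq_add]
    _ ≤ Real.exp (-(r / ε)) * ‖v ε (t - r) + G t‖
        + (1 - Real.exp (-(r / ε))) * (η / 3 + η / 3) := hrelax
    _ ≤ Real.exp (-(r / ε)) * (V + C) + 1 * (η / 3 + η / 3) := by
        gcongr
        exact sub_le_self 1 (Real.exp_nonneg _)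
    _ < η := by linarith

end Relaxation

section CharacteristicPath

variable {E : Type*} [NormedAddCommGroup E] [NormedSpace ℝ E]

lemma dist_le_mul_sub_of_isIntegralCurveOn {a b V : ℝ} {F : ℝ → E → E} {x : ℝ → E}
    (hx : IsIntegralCurveOn x F (Icc a b)) (hV : ∀ t ∈ Icc a b, ‖F t (x t)‖ ≤ V)
    {t : ℝ} (ht : t ∈ Icc a b) : dist (x t) (x a) ≤ V * (t - a) := by
  have ha : a ∈ Icc a b := left_mem_Icc.2 (ht.1.trans ht.2)
  rw [dist_eq_norm, ← Real.norm_of_nonneg (sub_nonneg.2 ht.1)]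
  exact (convex_Icc a b).norm_image_sub_le_of_norm_hasDerivWithin_le hx hV ha ht

/-- `(x, v)` is a characteristic path with inertia parameter `ε` in the field `g` on the time set
`s`: it solves `x' = v`, `ε v' = -v - g(t, x)`. Derivatives are taken within `s`, so that paths
defined on a closed time interval only are covered. -/
structure IsCharacteristicPath (ε : ℝ) (g : ℝ → E → E) (x v : ℝ → E) (s : Set ℝ) : Prop where
  position : IsIntegralCurveOn x (fun t _ ↦ v t) s
  velocity : IsIntegralCurveOn v (fun t w ↦ ε⁻¹ • (-w - g t (x t))) s

namespace IsCharacteristicPath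

lemma hasDerivWithinAt_position_add_smul_velocity {ε t : ℝ} {g : ℝ → E → E} {x v : ℝ → E}
    {s : Set ℝ} (h : IsCharacteristicPath ε g x v s) (hε : ε ≠ 0) (ht : t ∈ s) :
    HasDerivWithinAt (fun r ↦ x r + ε • v r) (-g t (x t)) s t := by
  refine ((h.position t ht).add ((h.velocity t ht).const_smul ε)).congr_deriv ?_
  rw [smul_inv_smul₀ hε]
  abel

lemma dist_le_gronwallBound {ε a b V β : ℝ} {L : NNReal} {g G : ℝ → E → E} {x v y : ℝ → E}
    (h : IsCharacteristicPath ε g x v (Icc a b)) (hε : 0 < ε)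
    (hV : ∀ t ∈ Icc a b, ‖v t‖ ≤ V) (hG : ∀ t ∈ Icc a b, LipschitzWith L (G t))
    (hgG : ∀ t ∈ Icc a b, dist (g t (x t)) (G t (x t)) ≤ β)
    (hy : IsIntegralCurveOn y (fun t z ↦ -G t z) (Icc a b)) (hxy : x a = y a)
    {t : ℝ} (ht : t ∈ Icc a b) :
    dist (x t) (y t) ≤ ε * V + gronwallBound (ε * V) L (β + L * (ε * V)) (t - a) := by
  have hshift (s : ℝ) (hs : s ∈ Icc a b) : dist (x s) (x s + ε • v s) ≤ ε * V := by
    rw [dist_self_add_right, norm_smul, Real.norm_of_nonneg hε.le]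
    gcongr
    exact hV s hs
  have hderiv (s : ℝ) (hs : s ∈ Icc a b) :=
    h.hasDerivWithinAt_position_add_smul_velocity hε.ne' hs
  have happrox (s : ℝ) (hs : s ∈ Icc a b) :
      dist (-g s (x s)) (-G s (x s + ε • v s)) ≤ β + L * (ε * V) := by
    rw [dist_neg_neg]
    exact (dist_triangle _ (G s (x s)) _).trans
      (add_le_add (hgG s hs) ((hG s hs).dist_le_mul_of_le (hshift s hs)))
  have hgronwall := dist_le_of_approx_trajectories_ODE_of_mem (v := fun s z ↦ -G s z)
    (s := fun _ ↦ univ) (δ := ε * V)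
    (fun s hs ↦ (hG s (Ico_subset_Icc_self hs)).neg.lipschitzOnWith)
    (fun s hs ↦ (hderiv s hs).continuousWithinAt)
    (fun s hs ↦ (hderiv s (Ico_subset_Icc_self hs)).mono_of_mem_nhdsWithin
      (Icc_mem_nhdsGE_of_mem hs))
    (fun s hs ↦ happrox s (Ico_subset_Icc_self hs))
    (fun _ _ ↦ mem_univ _)
    hy.continuousOn
    (fun s hs ↦ (hy s (Ico_subset_Icc_self hs)).mono_of_mem_nhdsWithin (Icc_mem_nhdsGE_of_mem hs))
    (fun _ _ ↦ (dist_self _).le)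
    (fun _ _ ↦ mem_univ _)
    (by rw [dist_comm, ← hxy]; exact hshift a (left_mem_Icc.2 (ht.1.trans ht.2)))
    t ht
  rw [add_zero] at hgronwall
  exact (dist_triangle _ _ _).trans (add_le_add (hshift t ht) hgronwall)

end IsCharacteristicPath

end CharacteristicPath

section ZeroInertiaLimit

lemma continuous_gronwallBound (K x : ℝ) :
    Continuous fun p : ℝ × ℝ ↦ gronwallBound p.1 K p.2 x := by
  unfold gronwallBound
  split_ifs <;> fun_prop

lemma exists_pos_eventually_gronwallBound_lt (K V x : ℝ) {η : ℝ} (hη : 0 < η) :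
    ∃ β > 0, ∀ᶠ ε in 𝓝[>] (0 : ℝ),
      ε * V + gronwallBound (ε * V) K (β + K * (ε * V)) x < η := by
  have hcont : Continuous fun p : ℝ × ℝ ↦
      p.2 * V + gronwallBound (p.2 * V) K (p.1 + K * (p.2 * V)) x :=
    (by fun_prop : Continuous fun p : ℝ × ℝ ↦ p.2 * V).add
      ((continuous_gronwallBound K x).comp
        (by fun_prop : Continuous fun p : ℝ × ℝ ↦ (p.2 * V, p.1 + K * (p.2 * V))))
  have hsmall := (hcont.tendsto (0, 0)).eventually_lt_const (u := η)
    (by simpa [gronwallBound_ε0_δ0] using hη)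
  rw [nhds_prod_eq] at hsmall
  have hiter := hsmall.curry.filter_mono (nhdsWithin_le_nhds (s := Ioi 0))
  obtain ⟨β, hβ, hβpos⟩ := (hiter.and self_mem_nhdsWithin).exists
  exact ⟨β, hβpos, hβ.filter_mono nhdsWithin_le_nhds⟩

lemma tendstoUniformlyOn_comp_of_lipschitzWith {ι α E F : Type*} [PseudoMetricSpace E]
    [PseudoMetricSpace F] {l : Filter ι} {s : Set α} {L : NNReal} {g : ι → α → E → F}
    {G : α → E → F} {x : ι → α → E} {y : α → E}
    (hG : ∀ t ∈ s, LipschitzWith L (G t))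
    (hgG : ∀ β > 0, ∀ᶠ i in l, ∀ t ∈ s, dist (g i t (x i t)) (G t (x i t)) ≤ β)
    (hx : TendstoUniformlyOn x y l s) :
    TendstoUniformlyOn (fun i t ↦ g i t (x i t)) (fun t ↦ G t (y t)) l s := by
  rw [Metric.tendstoUniformlyOn_iff] at hx ⊢
  intro η hη
  filter_upwards [hgG (η / 2) (by positivity), hx (η / (2 * (L + 1))) (by positivity)]
    with i hgi hxi t ht
  calc dist (G t (y t)) (g i t (x i t))
      ≤ dist (G t (y t)) (G t (x i t)) + dist (G t (x i t)) (g i t (x i t)) := dist_triangle _ _ _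
    _ ≤ L * dist (y t) (x i t) + η / 2 :=
        add_le_add ((hG t ht).dist_le_mul _ _) (dist_comm (G t (x i t)) _ ▸ hgi t ht)
    _ ≤ (L + 1) * dist (y t) (x i t) + η / 2 := by
        gcongr
        exact le_add_of_nonneg_right zero_le_one
    _ < (L + 1) * (η / (2 * (L + 1))) + η / 2 := by
        gcongr
        exact hxi t ht
    _ = η := by
        field_simp
        ring

variable {E : Type*} [NormedAddCommGroup E] [NormedSpace ℝ E] {g : ℝ → ℝ → E → E} {G : ℝ → E → E}
  {x v : ℝ → ℝ → E} {y : ℝ → E} {L : NNReal}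

lemma tendstoUniformlyOn_position {a b V : ℝ}
    (hpath : ∀ ε > 0, IsCharacteristicPath ε (g ε) (x ε) (v ε) (Icc a b))
    (hV : ∀ ε > 0, ∀ t ∈ Icc a b, ‖v ε t‖ ≤ V) (hG : ∀ t ∈ Icc a b, LipschitzWith L (G t))
    (hgG : ∀ β > 0, ∀ᶠ ε in 𝓝[>] (0 : ℝ), ∀ t ∈ Icc a b,
      dist (g ε t (x ε t)) (G t (x ε t)) ≤ β)
    (hy : IsIntegralCurveOn y (fun t z ↦ -G t z) (Icc a b)) (hxy : ∀ ε > 0, x ε a = y a) :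
    TendstoUniformlyOn x y (𝓝[>] 0) (Icc a b) := by
  rw [Metric.tendstoUniformlyOn_iff]
  intro η hη
  obtain ⟨β, hβ, hbound⟩ := exists_pos_eventually_gronwallBound_lt L V (b - a) hη
  filter_upwards [hgG β hβ, hbound, self_mem_nhdsWithin] with ε hgε hε hpos t ht
  have hpos : 0 < ε := hpos
  have hV0 : 0 ≤ V := (norm_nonneg _).trans (hV ε hpos t ht)
  rw [dist_comm]
  calc dist (x ε t) (y t)
      ≤ ε * V + gronwallBound (ε * V) L (β + L * (ε * V)) (t - a) :=
        (hpath ε hpos).dist_le_gronwallBound hpos (hV ε hpos) hG hgε hy (hxy ε hpos) ht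
    _ ≤ ε * V + gronwallBound (ε * V) L (β + L * (ε * V)) (b - a) := by
        gcongr
        exact gronwallBound_mono (by positivity) (by positivity) L.coe_nonneg
          (sub_le_sub_right ht.2 a)
    _ < η := hε

theorem characteristic_paths_zero_inertia_limit_general {T M : ℝ} {x₀ v₀ : E}
    (hbound : ∀ ε > 0, ∀ t ∈ Icc 0 T, ∀ z, ‖g ε t z‖ ≤ M)
    (hlip : ∀ t ∈ Icc 0 T, LipschitzWith L (G t))
    (hcont : ∀ z, ContinuousOn (fun t ↦ G t z) (Icc 0 T))
    (hfield : ∀ R, TendstoUniformlyOn (fun ε (p : ℝ × E) ↦ g ε p.1 p.2) (fun p ↦ G p.1 p.2)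
      (𝓝[>] 0) (Icc 0 T ×ˢ Metric.closedBall x₀ R))
    (hpath : ∀ ε > 0, IsCharacteristicPath ε (g ε) (x ε) (v ε) (Icc 0 T))
    (hx₀ : ∀ ε > 0, x ε 0 = x₀) (hv₀ : ∀ ε > 0, v ε 0 = v₀)
    (hy : IsIntegralCurveOn y (fun t z ↦ -G t z) (Icc 0 T)) (hy₀ : y 0 = x₀) :
    TendstoUniformlyOn x y (𝓝[>] 0) (Icc 0 T) ∧
      ∀ δ > 0, TendstoUniformlyOn v (fun t ↦ -G t (y t)) (𝓝[>] 0) (Icc δ T) := by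
  have hV : ∀ ε > 0, ∀ t ∈ Icc 0 T, ‖v ε t‖ ≤ max ‖v₀‖ M := fun ε hε t ht ↦
    hv₀ ε hε ▸ norm_le_max_of_relaxation hε (hpath ε hε).velocity (fun s hs ↦ hbound ε hε s hs _) ht
  have hball : ∀ ε > 0, ∀ t ∈ Icc 0 T, x ε t ∈ Metric.closedBall x₀ (max ‖v₀‖ M * T) := by
    intro ε hε t ht
    have hdist := dist_le_mul_sub_of_isIntegralCurveOn (hpath ε hε).position (hV ε hε) ht
    rw [hx₀ ε hε, sub_zero] at hdist
    exact hdist.trans (by gcongr; exact ht.2)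
  have hgG : ∀ β > 0, ∀ᶠ ε in 𝓝[>] (0 : ℝ), ∀ t ∈ Icc 0 T,
      dist (g ε t (x ε t)) (G t (x ε t)) ≤ β := by
    intro β hβ
    filter_upwards [Metric.tendstoUniformlyOn_iff.1 (hfield (max ‖v₀‖ M * T)) β hβ,
      self_mem_nhdsWithin] with ε hε hpos t ht
    rw [dist_comm]
    exact (hε (t, x ε t) ⟨ht, hball ε hpos t ht⟩).le
  have hx := tendstoUniformlyOn_position hpath hV hlip hgG hy fun ε hε ↦ (hx₀ ε hε).trans hy₀.symm
  have hforce := tendstoUniformlyOn_comp_of_lipschitzWith hlip hgG hx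
  have hforce_cont : ContinuousOn (fun t ↦ G t (y t)) (Icc 0 T) :=
    (continuousOn_prod_of_continuousOn_lipschitzOnWith' (fun p : ℝ × E ↦ G p.1 p.2) L
      (fun t ht ↦ (hlip t ht).lipschitzOnWith (s := univ)) (fun z _ ↦ hcont z)).comp
      (continuousOn_id.prodMk hy.continuousOn) (fun t ht ↦ ⟨ht, mem_univ _⟩)
  exact ⟨hx, fun δ hδ ↦ tendstoUniformlyOn_neg_of_relaxation hδ
    (fun ε hε ↦ (hpath ε hε).velocity) hV hforce hforce_cont⟩

end ZeroInertiaLimit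

lemma continuousOn_integral_of_narrow {X Ω F : Type*} [TopologicalSpace X] [TopologicalSpace Ω]
    [MeasurableSpace Ω] [OpensMeasurableSpace Ω] [NormedAddCommGroup F] [NormedSpace ℝ F]
    [FiniteDimensional ℝ F] {s : Set X} {ρ : X → Measure Ω}
    (hfin : ∀ t ∈ s, IsFiniteMeasure (ρ t))
    (hρ : ∀ ψ : Ω →ᵇ ℝ, ContinuousOn (fun t ↦ ∫ ω, ψ ω ∂ρ t) s) (f : Ω →ᵇ F) :
    ContinuousOn (fun t ↦ ∫ ω, f ω ∂ρ t) s := by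
  borelize F
  let e := (Module.finBasis ℝ F).equivFunL
  rw [← e.comp_continuousOn_iff, continuousOn_pi]
  intro i
  let coord : F →L[ℝ] ℝ := (ContinuousLinearMap.proj i).comp e.toContinuousLinearMap
  refine (hρ (coord.compLeftContinuousBounded Ω f)).congr fun t ht ↦ ?_
  have := hfin t ht
  exact (coord.integral_comp_comm (f.integrable (ρ t))).symm

section InteractionField

variable {d : ℕ} {M : ℝ} {gradK : EuclideanSpace ℝ (Fin d) → EuclideanSpace ℝ (Fin d)}

lemma norm_interactionField_le (hbound : ∀ z, ‖gradK z‖ ≤ M)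
    (μ : Measure (EuclideanSpace ℝ (Fin d))) [IsProbabilityMeasure μ]
    (x : EuclideanSpace ℝ (Fin d)) : ‖interactionField gradK μ x‖ ≤ M := by
  simpa [interactionField] using
    norm_integral_le_of_norm_le_const (μ := μ) (.of_forall fun y ↦ hbound (x - y))

lemma lipschitzWith_interactionField {L : NNReal} (hbound : ∀ z, ‖gradK z‖ ≤ M)
    (hlip : LipschitzWith L gradK) (μ : Measure (EuclideanSpace ℝ (Fin d)))
    [IsProbabilityMeasure μ] : LipschitzWith L (interactionField gradK μ) := by
  have hint (x : EuclideanSpace ℝ (Fin d)) : Integrable (fun y ↦ gradK (x - y)) μ :=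
    .of_bound (hlip.continuous.comp (continuous_sub_left x)).aestronglyMeasurable M
      (.of_forall fun y ↦ hbound (x - y))
  refine .of_dist_le_mul fun x z ↦ ?_
  rw [dist_eq_norm, interactionField, interactionField, ← integral_sub (hint x) (hint z)]
  simpa using norm_integral_le_of_norm_le_const (μ := μ) (C := L * dist x z)
    (.of_forall fun y ↦ by simpa [dist_eq_norm] using hlip.norm_sub_le (x - y) (z - y))

lemma continuousOn_interactionField {X : Type*} [TopologicalSpace X] {s : Set X}
    {ρ : X → Measure (EuclideanSpace ℝ (Fin d))} (hbound : ∀ z, ‖gradK z‖ ≤ M)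
    (hgradK : Continuous gradK) (hfin : ∀ t ∈ s, IsFiniteMeasure (ρ t))
    (hρ : ∀ ψ : EuclideanSpace ℝ (Fin d) →ᵇ ℝ, ContinuousOn (fun t ↦ ∫ y, ψ y ∂ρ t) s)
    (x : EuclideanSpace ℝ (Fin d)) : ContinuousOn (fun t ↦ interactionField gradK (ρ t) x) s :=
  continuousOn_integral_of_narrow hfin hρ
    (.ofNormedAddCommGroup (fun y ↦ gradK (x - y)) (hgradK.comp (continuous_sub_left x)) M
      fun y ↦ hbound (x - y))

lemma IsKineticMeasureSolution.isProbabilityMeasure_map_fst {ε T t : ℝ}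
    {f₀ : Measure (EuclideanSpace ℝ (Fin d) × EuclideanSpace ℝ (Fin d))} [IsProbabilityMeasure f₀]
    {f : ℝ → Measure (EuclideanSpace ℝ (Fin d) × EuclideanSpace ℝ (Fin d))}
    (hf : IsKineticMeasureSolution gradK ε T f₀ f) (ht : t ∈ Icc 0 T) :
    IsProbabilityMeasure ((f t).map Prod.fst) := by
  obtain ⟨Φ, hΦ, -, -, hpush⟩ := hf
  rw [hpush t ht]
  have := Measure.isProbabilityMeasure_map (μ := f₀) (hΦ t).aemeasurable
  exact Measure.isProbabilityMeasure_map measurable_fst.aemeasurable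

end InteractionField

/-- **Convergence of characteristic paths in the zero-inertia limit
(Theorem 5.2).** In the setting of the macroscopic limit — `∇K` bounded and
Lipschitz, `f₀` compactly supported, `fε ε` measure solutions with marginals
`ρ_ε t`, `ρ t` a narrowly continuous family of compactly supported probability
measures with `∇K ∗ ρ_ε → ∇K ∗ ρ` uniformly on `[0,T] ×` compacts — let
`(x₀,v₀) ∈ supp f₀` and `(xε ε, vε ε)` solve the characteristic system
`dx/dt = v`, `ε dv/dt = -v - (∇K ∗ ρ_ε)(t,x)` from `(x₀,v₀)`. Then as
`ε → 0⁺`, `xε ε t → x t` for all `t ∈ [0,T]`, where `x` solves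
`dx/dt = -(∇K ∗ ρ)(t,x)`, `x 0 = x₀`, and `vε ε t → -(∇K ∗ ρ(t))(x t)` for all
`t ∈ (0,T]`. -/
theorem characteristic_paths_zero_inertia_limit
    (d : ℕ) (T M : ℝ) (hT : 0 < T) (hM : 0 ≤ M)
    (gradK : EuclideanSpace ℝ (Fin d) → EuclideanSpace ℝ (Fin d)) (L : NNReal)
    (hbound : ∀ z, ‖gradK z‖ ≤ M)
    (hlip : LipschitzWith L gradK)
    (f₀ : Measure (EuclideanSpace ℝ (Fin d) × EuclideanSpace ℝ (Fin d)))
    [IsProbabilityMeasure f₀]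
    (hsupp : ∃ R₀ : ℝ, f₀ {p | R₀ < max ‖p.1‖ ‖p.2‖} = 0)
    (fε : ℝ → ℝ → Measure (EuclideanSpace ℝ (Fin d) × EuclideanSpace ℝ (Fin d)))
    (hfε : ∀ ε > (0:ℝ), IsKineticMeasureSolution gradK ε T f₀ (fε ε))
    (ρ : ℝ → Measure (EuclideanSpace ℝ (Fin d)))
    (hρprob : ∀ t ∈ Icc (0:ℝ) T, IsProbabilityMeasure (ρ t))
    (hρsupp : ∃ R : ℝ, ∀ t ∈ Icc (0:ℝ) T, ρ t {x | R < ‖x‖} = 0)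
    (hρcont : ∀ ψ : BoundedContinuousFunction (EuclideanSpace ℝ (Fin d)) ℝ,
      ContinuousOn (fun t => ∫ x, ψ x ∂(ρ t)) (Icc 0 T))
    (hfield : ∀ Ω : Set (EuclideanSpace ℝ (Fin d)), IsCompact Ω →
      TendstoUniformlyOn
        (fun ε (p : ℝ × EuclideanSpace ℝ (Fin d)) =>
          interactionField gradK ((fε ε p.1).map Prod.fst) p.2)
        (fun p => interactionField gradK (ρ p.1) p.2)
        (𝓝[>] (0:ℝ)) (Icc 0 T ×ˢ Ω))
    (x₀ v₀ : EuclideanSpace ℝ (Fin d))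
    (hx₀v₀ : ∀ U : Set (EuclideanSpace ℝ (Fin d) × EuclideanSpace ℝ (Fin d)),
      IsOpen U → (x₀, v₀) ∈ U → 0 < f₀ U)   -- (x₀, v₀) ∈ supp f₀
    (xε vε : ℝ → ℝ → EuclideanSpace ℝ (Fin d))
    (hxε0 : ∀ ε > (0:ℝ), xε ε 0 = x₀)
    (hvε0 : ∀ ε > (0:ℝ), vε ε 0 = v₀)
    (hxε : ∀ ε > (0:ℝ), ∀ t ∈ Icc (0:ℝ) T, HasDerivAt (xε ε) (vε ε t) t)
    (hvε : ∀ ε > (0:ℝ), ∀ t ∈ Icc (0:ℝ) T,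
      HasDerivAt (vε ε)
        (ε⁻¹ • (-(vε ε t) -
          interactionField gradK ((fε ε t).map Prod.fst) (xε ε t))) t)
    (x : ℝ → EuclideanSpace ℝ (Fin d))
    (hx0 : x 0 = x₀)
    (hx : ∀ t ∈ Icc (0:ℝ) T,
      HasDerivAt x (-(interactionField gradK (ρ t) (x t))) t) :
    (∀ t ∈ Icc (0:ℝ) T,
      Tendsto (fun ε => xε ε t) (𝓝[>] (0:ℝ)) (𝓝 (x t))) ∧
    (∀ t ∈ Ioc (0:ℝ) T,
      Tendsto (fun ε => vε ε t) (𝓝[>] (0:ℝ))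
        (𝓝 (-(interactionField gradK (ρ t) (x t))))) := by
  obtain ⟨hpos, hvel⟩ := characteristic_paths_zero_inertia_limit_general
    (g := fun ε t ↦ interactionField gradK ((fε ε t).map Prod.fst))
    (G := fun t ↦ interactionField gradK (ρ t))
    (fun ε hε t ht z ↦ have := (hfε ε hε).isProbabilityMeasure_map_fst ht
      norm_interactionField_le hbound _ z)
    (fun t ht ↦ have := hρprob t ht
      lipschitzWith_interactionField hbound hlip (ρ t))
    (continuousOn_interactionField hbound hlip.continuous
      (fun t ht ↦ have := hρprob t ht; inferInstance) hρcont)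
    (fun R ↦ hfield _ (isCompact_closedBall x₀ R))
    (fun ε hε ↦ ⟨fun t ht ↦ (hxε ε hε t ht).hasDerivWithinAt,
      fun t ht ↦ (hvε ε hε t ht).hasDerivWithinAt⟩)
    hxε0 hvε0 (fun t ht ↦ (hx t ht).hasDerivWithinAt) hx0
  exact ⟨fun t ht ↦ hpos.tendsto_at ht, fun t ht ↦ (hvel t ht.1).tendsto_at ⟨le_rfl, ht.2⟩⟩
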